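/- Work over ℤ[D₈], the integral group ring of the dihedral group of order 8 (the case n = 2), and let J = ker ∂₂ be the algebraic π₂ of the standard resolution. If M is a finitely generated ℤ[D₈]-module and M ⊕ ℤ[D₈]^r ≅ J ⊕ ℤ[D₈]^s for some natural numbers r, s, then s ≥ r and M ≅ J ⊕ ℤ[D₈]^{s−r}. -/

import Mathlib

/- `ℤ[D₈]` is `MonoidAlgebra ℤ (DihedralGroup 4)` (Mathlib's `DihedralGroup 4` has order 8).
Right `ℤ[D₈]`-modules are modules over the opposite ring `ℤ[D₈]ᵐᵒᵖ`; left multiplication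
by a fixed ring element is a right-module endomorphism.  `a = r 1`, `b = sr 0`,
`Σ = 1 + a + a² + a³`, `∂₂ : (x,y,z) ↦ (Σx + (1+ba)z, (1+b)y + (a−1)z)` and `J = ker ∂₂`. -/

noncomputable section

abbrev R8 : Type := MonoidAlgebra ℤ (DihedralGroup 4)

def gena : R8 := MonoidAlgebra.of ℤ (DihedralGroup 4) (DihedralGroup.r 1)

def genb : R8 := MonoidAlgebra.of ℤ (DihedralGroup 4) (DihedralGroup.sr 0)

/-- `Σ = 1 + a + a² + a³`. -/
def sig : R8 := ∑ i ∈ Finset.range 4, gena ^ i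

/-- Left multiplication by `c`, as a right `ℤ[D₈]`-module map. -/
def mulLeftOp (c : R8) : R8 →ₗ[R8ᵐᵒᵖ] R8 := LinearMap.mulLeft R8ᵐᵒᵖ c

/-- `∂₂ : ℤ[D₈]³ → ℤ[D₈]²`, `(x,y,z) ↦ (Σx + (1+ba)z, (1+b)y + (a−1)z)`, as a right
`ℤ[D₈]`-module map. -/
def bdry2 : (R8 × R8 × R8) →ₗ[R8ᵐᵒᵖ] (R8 × R8) :=
  LinearMap.prod
    ((mulLeftOp sig).comp (LinearMap.fst R8ᵐᵒᵖ R8 (R8 × R8)) +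
      (mulLeftOp (1 + genb * gena)).comp
        ((LinearMap.snd R8ᵐᵒᵖ R8 R8).comp (LinearMap.snd R8ᵐᵒᵖ R8 (R8 × R8))))
    ((mulLeftOp (1 + genb)).comp
        ((LinearMap.fst R8ᵐᵒᵖ R8 R8).comp (LinearMap.snd R8ᵐᵒᵖ R8 (R8 × R8))) +
      (mulLeftOp (gena - 1)).comp
        ((LinearMap.snd R8ᵐᵒᵖ R8 R8).comp (LinearMap.snd R8ᵐᵒᵖ R8 (R8 × R8))))

/-- `J = ker ∂₂`, the algebraic `π₂` of the standard resolution over `ℤ[D₈]`. -/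
def J : Submodule R8ᵐᵒᵖ (R8 × R8 × R8) := LinearMap.ker bdry2

theorem sr1_semisimple {B : Type*} [Ring B] [Finite B] [IsSemisimpleRing B] (a b y z : B)
    (h : y * a + z * b = 1) : ∃ t, ∃ w, w * (a + t * b) = 1 := by
  classical
  -- choose t with maximal range
  obtain ⟨t, ht⟩ := Finite.exists_max (fun t : B =>
    Nat.card (LinearMap.range (LinearMap.toSpanSingleton B B (a + t * b))))
  set a' := a + t * b with ha'
  set φ := LinearMap.toSpanSingleton B B a' with hφ
  have hφa : ∀ x, φ x = x * a' := fun x => by simp [hφ]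
  by_cases hs : ∃ w, w * a' = 1
  · exact ⟨t, hs⟩
  exfalso
  have h1 : ∀ s : B, ∃ p q, s = p * a' + q * b := by
    intro s
    refine ⟨s * y, s * z - s * y * t, ?_⟩
    calc s = s * (y * a + z * b) := by rw [h, mul_one]
      _ = _ := by rw [ha']; noncomm_ring
  set I := LinearMap.range φ with hI
  set K := LinearMap.ker φ with hK
  obtain ⟨C, hC⟩ := exists_isCompl I
  obtain ⟨Lc, hL⟩ := exists_isCompl K
  have eKL : (K × Lc) ≃ₗ[B] B := Submodule.prodEquivOfIsCompl K Lc hL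
  have eIC : (I × C) ≃ₗ[B] B := Submodule.prodEquivOfIsCompl I C hC
  have eLI : Lc ≃ₗ[B] I :=
    (Submodule.quotientEquivOfIsCompl K Lc hL).symm ≪≫ₗ φ.quotKerEquivRange
  have : ∀ (X Y : Type _) [AddCommGroup X] [AddCommGroup Y] [Module B X] [Module B Y] [Finite X] [Finite Y],
    Finite (X →ₗ[B] Y) := fun X Y _ _ _ _ _ _ => DFunLike.finite _
  have c1 : Nat.card (K →ₗ[B] C) * Nat.card (Lc →ₗ[B] C) = Nat.card (B →ₗ[B] C) := by
    rw [← Nat.card_prod]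
    exact Nat.card_congr ((LinearMap.coprodEquiv ℕ).toEquiv.trans
      (LinearEquiv.congrLeft C ℕ eKL).toEquiv)
  have c2 : Nat.card (I →ₗ[B] C) * Nat.card (C →ₗ[B] C) = Nat.card (B →ₗ[B] C) := by
    rw [← Nat.card_prod]
    exact Nat.card_congr ((LinearMap.coprodEquiv ℕ).toEquiv.trans
      (LinearEquiv.congrLeft C ℕ eIC).toEquiv)
  have c3 : Nat.card (Lc →ₗ[B] C) = Nat.card (I →ₗ[B] C) :=
    Nat.card_congr (LinearEquiv.congrLeft C ℕ eLI).toEquiv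
  have c4 : Nat.card (K →ₗ[B] C) = Nat.card (C →ₗ[B] C) := by
    have hpos : 0 < Nat.card (I →ₗ[B] C) := Nat.card_pos
    rw [c3, ← c2, mul_comm] at c1
    exact Nat.eq_of_mul_eq_mul_left hpos c1
  have hCne : C ≠ ⊥ := by
    rintro rfl
    have : I = ⊤ := by simpa using hC.codisjoint.eq_top
    have h1 : (1 : B) ∈ I := this ▸ Submodule.mem_top
    obtain ⟨w, hw⟩ := h1
    exact hs ⟨w, by rw [← hφa, hw]⟩
  have : Nontrivial C := Submodule.nontrivial_iff_ne_bot.mpr hCne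
  have : Nontrivial (C →ₗ[B] C) := inferInstanceAs (Nontrivial (Module.End B C))
  have c5 : 1 < Nat.card (K →ₗ[B] C) := by rw [c4]; exact Finite.one_lt_card
  have := Finite.one_lt_card_iff_nontrivial.mp c5
  obtain ⟨ψ, hψ⟩ := exists_ne (0 : K →ₗ[B] C)
  let pr : B →ₗ[B] K := Submodule.projectionOnto K Lc hL
  let lam : B →ₗ[B] B := C.subtype ∘ₗ ψ ∘ₗ pr
  set e : B := ((pr 1 : K) : B) with he
  have hpr : ∀ x, (pr x : B) = x * e := fun x => by
    have : pr x = x • pr 1 := by rw [← map_smul]; simp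
    rw [this]; rfl
  have hlam : ∀ x, lam x = x * lam 1 := fun x => by
    have : lam x = x • lam 1 := by rw [← map_smul]; simp
    rw [this]; rfl
  set s := lam 1 with hsdef
  have hsC : s ∈ C := (ψ (pr 1)).2
  have hs0 : s ≠ 0 := by
    intro h0
    apply hψ
    ext k
    have : lam k = 0 := by rw [hlam, h0, mul_zero]
    have hk : pr k = k := Submodule.projectionOnto_apply_left hL k
    have h2 : ((ψ (pr k) : C) : B) = 0 := this
    rw [hk] at h2
    simpa using h2
  have hes : e * s = s := by
    have hk : pr e = pr 1 := Submodule.projectionOnto_apply_left hL (pr 1)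
    rw [← hlam]
    show ((ψ (pr e) : C) : B) = _
    rw [hk]; rfl
  have hea : e * a' = 0 := by
    have : φ e = 0 := (pr 1).2
    rwa [hφa] at this
  obtain ⟨p, q, hpq⟩ := h1 s
  have key := ht (t + e * q)
  have ha2 : a + (t + e * q) * b = a' + e * q * b := by rw [ha']; noncomm_ring
  rw [ha2] at key
  set I' := LinearMap.range (LinearMap.toSpanSingleton B B (a' + e * q * b)) with hI'
  have hsub : I ≤ I' := by
    rintro _ ⟨x, rfl⟩
    refine ⟨x - x * e, ?_⟩
    have hee : e * e = e := by
      have hk : pr e = pr 1 := Submodule.projectionOnto_apply_left hL (pr 1)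
      rw [← hpr, hk]
    rw [hφa, LinearMap.toSpanSingleton_apply, smul_eq_mul]
    have : (x - x * e) * (a' + e * q * b) = x * a' - x * (e * a') + (x * e - x * (e * e)) * q * b := by
      noncomm_ring
    rw [this, hea, hee]; simp
  have hmem : s ∈ I' := by
    have h3 : e * (q * b) = s - e * p * a' := by
      have : e * s = e * p * a' + e * (q * b) := by rw [hpq]; noncomm_ring
      rw [hes] at this
      rw [this]; noncomm_ring
    have h4 : s - e * p * a' ∈ I' := by
      refine ⟨e, ?_⟩
      rw [LinearMap.toSpanSingleton_apply, smul_eq_mul, mul_add, hea, zero_add, ← h3]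
      have hee : e * e = e := by
        have hk : pr e = pr 1 := Submodule.projectionOnto_apply_left hL (pr 1)
        rw [← hpr, hk]
      calc e * (e * q * b) = (e * e) * (q * b) := by noncomm_ring
        _ = _ := by rw [hee]
    have h5 : e * p * a' ∈ I' := hsub ⟨e * p, hφa _⟩
    simpa using I'.add_mem h4 h5
  have hle : I' ≤ I := by
    have hfin : (I' : Set B).Finite := Set.toFinite _
    have : (I : Set B) = I' := Set.eq_of_subset_of_ncard_le hsub (by
      rw [← Nat.card_coe_set_eq, ← Nat.card_coe_set_eq]; exact key) hfin
    exact this.symm.le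
  have := Submodule.disjoint_def.mp hC.disjoint s (hle hmem) hsC
  exact hs0 this

theorem sr1_finite {A : Type*} [Ring A] [Finite A] (a b y z : A)
    (h : y * a + z * b = 1) : ∃ t, ∃ w, w * (a + t * b) = 1 := by
  have : IsArtinianRing A := inferInstance
  have : IsSemisimpleRing (A ⧸ Ring.jacobson A) := IsArtinianRing.isSemisimpleRing_iff_jacobson.mpr (Ring.jacobson_quotient_jacobson A)
  let π := Ideal.Quotient.mk (Ring.jacobson A)
  have : Finite (A ⧸ Ring.jacobson A) := Finite.of_surjective π Ideal.Quotient.mk_surjective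
  obtain ⟨t, w, hw⟩ := sr1_semisimple (π a) (π b) (π y) (π z) (by rw [← map_mul, ← map_mul, ← map_add, h, map_one])
  obtain ⟨t, rfl⟩ := Ideal.Quotient.mk_surjective t
  obtain ⟨w, rfl⟩ := Ideal.Quotient.mk_surjective w
  refine ⟨t, ?_⟩
  have hm : w * (a + t * b) - 1 ∈ Ring.jacobson A := by
    rw [← Ideal.Quotient.eq]
    simpa using hw
  rw [← Ideal.jacobson_bot] at hm
  obtain ⟨s, hs⟩ := Ideal.exists_mul_sub_mem_of_sub_one_mem_jacobson _ hm
  refine ⟨s * w, ?_⟩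
  rw [mul_assoc]
  simpa [sub_eq_zero] using hs

/-- right version -/
theorem sr1_right {A : Type*} [Ring A] [Finite A] (a b y z : A)
    (h : a * y + b * z = 1) : ∃ t, ∃ w, (a + b * t) * w = 1 := by
  have : Finite Aᵐᵒᵖ := Finite.of_equiv A MulOpposite.opEquiv
  obtain ⟨t, w, hw⟩ := sr1_finite (MulOpposite.op a) (MulOpposite.op b) (MulOpposite.op y) (MulOpposite.op z) (by
    rw [← MulOpposite.op_mul, ← MulOpposite.op_mul, ← MulOpposite.op_add, h, MulOpposite.op_one])
  refine ⟨t.unop, w.unop, ?_⟩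
  have := congrArg MulOpposite.unop hw
  simpa using this


section Part2
open MonoidAlgebra DihedralGroup

def aug : R8 →+* ℤ := (MonoidAlgebra.lift ℤ ℤ (DihedralGroup 4) 1).toRingHom

@[simp] theorem aug_single (g : DihedralGroup 4) (k : ℤ) : aug (single g k) = k := by
  simp [aug]

@[simp] theorem aug_gena : aug gena = 1 := by simp [gena]
@[simp] theorem aug_genb : aug genb = 1 := by simp [genb]

def nrm : R8 := ∑ g : DihedralGroup 4, single g 1

theorem aug_nrm : aug nrm = 8 := by
  simp [nrm, DihedralGroup.card]

theorem single_mul_nrm (g : DihedralGroup 4) (k : ℤ) : (single g k : R8) * nrm = (k : R8) * nrm := by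
  have : (single g k : R8) = (k : R8) * single g 1 := by
    rw [← zsmul_eq_mul]; simp 
  rw [this, mul_assoc]
  congr 1
  rw [nrm, Finset.mul_sum]
  simp only [single_mul_single, one_mul]
  exact Fintype.sum_equiv (Equiv.mulLeft g) _ _ (fun x => rfl)

theorem nrm_mul_single (g : DihedralGroup 4) (k : ℤ) : nrm * (single g k : R8) = (k : R8) * nrm := by
  have : (single g k : R8) = single g 1 * (k : R8) := by
    rw [← (Int.cast_commute k (single g 1 : R8)).eq, ← zsmul_eq_mul]; simp 
  rw [this, ← mul_assoc]
  have h2 : nrm * single g 1 = nrm := by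
    rw [nrm, Finset.sum_mul]
    simp only [single_mul_single, one_mul]
    exact Fintype.sum_equiv (Equiv.mulRight g) _ _ (fun x => rfl)
  rw [h2, (Int.cast_commute k nrm).eq]

theorem mul_nrm (x : R8) : x * nrm = (aug x : R8) * nrm := by
  induction x using MonoidAlgebra.induction_linear with
  | zero => simp
  | add f g hf hg => simp [add_mul, hf, hg]
  | single g k => simp [single_mul_nrm]

theorem nrm_mul (x : R8) : nrm * x = (aug x : R8) * nrm := by
  induction x using MonoidAlgebra.induction_linear with
  | zero => simp
  | add f g hf hg => simp [add_mul, mul_add, hf, hg]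
  | single g k => simp [nrm_mul_single]

theorem coeff_nrm (g : DihedralGroup 4) : nrm.coeff g = 1 := by
  simp [nrm]


theorem sum_D8 {A : Type*} [AddCommMonoid A] (f : DihedralGroup 4 → A) :
    ∑ g, f g = (f (r 0) + f (r 1) + f (r 2) + f (r 3)) +
      (f (sr 0) + f (sr 1) + f (sr 2) + f (sr 3)) := by
  rw [← (DihedralGroup.equivSum (n := 4)).symm.sum_comp, Fintype.sum_sum_type]
  congr 1
  · exact Fin.sum_univ_four (fun i : Fin 4 => f (r i))
  · exact Fin.sum_univ_four (fun i : Fin 4 => f (sr i))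

theorem aug_eq_sum (x : R8) : aug x = ∑ g, x.coeff g := by
  induction x using MonoidAlgebra.induction_linear with
  | zero => simp
  | add f g hf hg => simp [hf, hg, Finset.sum_add_distrib]
  | single g k => simp [Finsupp.single_apply]

theorem coeff_mul' (x y : R8) (g : DihedralGroup 4) :
    (x * y).coeff g = ∑ h, x.coeff h * y.coeff (h⁻¹ * g) := by
  induction x using MonoidAlgebra.induction_linear with
  | zero => simp
  | add f g hf hg => simp [hf, hg, add_mul, Finset.sum_add_distrib]
  | single g k => simp [Finsupp.single_apply, coeff_single_mul_apply]

theorem r8_ext {x y : R8} (h0 : x.coeff (r 0) = y.coeff (r 0)) (h1 : x.coeff (r 1) = y.coeff (r 1))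
    (h2 : x.coeff (r 2) = y.coeff (r 2)) (h3 : x.coeff (r 3) = y.coeff (r 3))
    (k0 : x.coeff (sr 0) = y.coeff (sr 0)) (k1 : x.coeff (sr 1) = y.coeff (sr 1))
    (k2 : x.coeff (sr 2) = y.coeff (sr 2)) (k3 : x.coeff (sr 3) = y.coeff (sr 3)) : x = y := by
  apply MonoidAlgebra.ext
  ext g
  rcases g with i | i
  · fin_cases i
    exacts [h0, h1, h2, h3]
  · fin_cases i
    exacts [k0, k1, k2, k3]

theorem mul_r0 (x y : R8) : (x * y).coeff (r 0) =
    (x.coeff (r 0) * y.coeff (r 0) + x.coeff (r 1) * y.coeff (r 3) +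
      x.coeff (r 2) * y.coeff (r 2) + x.coeff (r 3) * y.coeff (r 1)) +
    (x.coeff (sr 0) * y.coeff (sr 0) + x.coeff (sr 1) * y.coeff (sr 1) +
      x.coeff (sr 2) * y.coeff (sr 2) + x.coeff (sr 3) * y.coeff (sr 3)) := by
  rw [coeff_mul', sum_D8]; rfl

theorem mul_r1 (x y : R8) : (x * y).coeff (r 1) =
    (x.coeff (r 0) * y.coeff (r 1) + x.coeff (r 1) * y.coeff (r 0) +
      x.coeff (r 2) * y.coeff (r 3) + x.coeff (r 3) * y.coeff (r 2)) +
    (x.coeff (sr 0) * y.coeff (sr 1) + x.coeff (sr 1) * y.coeff (sr 2) +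
      x.coeff (sr 2) * y.coeff (sr 3) + x.coeff (sr 3) * y.coeff (sr 0)) := by
  rw [coeff_mul', sum_D8]; rfl

theorem mul_r2 (x y : R8) : (x * y).coeff (r 2) =
    (x.coeff (r 0) * y.coeff (r 2) + x.coeff (r 1) * y.coeff (r 1) +
      x.coeff (r 2) * y.coeff (r 0) + x.coeff (r 3) * y.coeff (r 3)) +
    (x.coeff (sr 0) * y.coeff (sr 2) + x.coeff (sr 1) * y.coeff (sr 3) +
      x.coeff (sr 2) * y.coeff (sr 0) + x.coeff (sr 3) * y.coeff (sr 1)) := by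
  rw [coeff_mul', sum_D8]; rfl

theorem mul_r3 (x y : R8) : (x * y).coeff (r 3) =
    (x.coeff (r 0) * y.coeff (r 3) + x.coeff (r 1) * y.coeff (r 2) +
      x.coeff (r 2) * y.coeff (r 1) + x.coeff (r 3) * y.coeff (r 0)) +
    (x.coeff (sr 0) * y.coeff (sr 3) + x.coeff (sr 1) * y.coeff (sr 0) +
      x.coeff (sr 2) * y.coeff (sr 1) + x.coeff (sr 3) * y.coeff (sr 2)) := by
  rw [coeff_mul', sum_D8]; rfl

theorem mul_sr0 (x y : R8) : (x * y).coeff (sr 0) =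
    (x.coeff (r 0) * y.coeff (sr 0) + x.coeff (r 1) * y.coeff (sr 1) +
      x.coeff (r 2) * y.coeff (sr 2) + x.coeff (r 3) * y.coeff (sr 3)) +
    (x.coeff (sr 0) * y.coeff (r 0) + x.coeff (sr 1) * y.coeff (r 3) +
      x.coeff (sr 2) * y.coeff (r 2) + x.coeff (sr 3) * y.coeff (r 1)) := by
  rw [coeff_mul', sum_D8]; rfl

theorem mul_sr1 (x y : R8) : (x * y).coeff (sr 1) =
    (x.coeff (r 0) * y.coeff (sr 1) + x.coeff (r 1) * y.coeff (sr 2) +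
      x.coeff (r 2) * y.coeff (sr 3) + x.coeff (r 3) * y.coeff (sr 0)) +
    (x.coeff (sr 0) * y.coeff (r 1) + x.coeff (sr 1) * y.coeff (r 0) +
      x.coeff (sr 2) * y.coeff (r 3) + x.coeff (sr 3) * y.coeff (r 2)) := by
  rw [coeff_mul', sum_D8]; rfl

theorem mul_sr2 (x y : R8) : (x * y).coeff (sr 2) =
    (x.coeff (r 0) * y.coeff (sr 2) + x.coeff (r 1) * y.coeff (sr 3) +
      x.coeff (r 2) * y.coeff (sr 0) + x.coeff (r 3) * y.coeff (sr 1)) +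
    (x.coeff (sr 0) * y.coeff (r 2) + x.coeff (sr 1) * y.coeff (r 1) +
      x.coeff (sr 2) * y.coeff (r 0) + x.coeff (sr 3) * y.coeff (r 3)) := by
  rw [coeff_mul', sum_D8]; rfl

theorem mul_sr3 (x y : R8) : (x * y).coeff (sr 3) =
    (x.coeff (r 0) * y.coeff (sr 3) + x.coeff (r 1) * y.coeff (sr 0) +
      x.coeff (r 2) * y.coeff (sr 1) + x.coeff (r 3) * y.coeff (sr 2)) +
    (x.coeff (sr 0) * y.coeff (r 3) + x.coeff (sr 1) * y.coeff (r 2) +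
      x.coeff (sr 2) * y.coeff (r 1) + x.coeff (sr 3) * y.coeff (r 0)) := by
  rw [coeff_mul', sum_D8]; rfl

theorem coeff_gena (g) : gena.coeff g = if g = r 1 then 1 else 0 := by
  simp [gena, Finsupp.single_apply, eq_comm]
theorem coeff_genb (g) : genb.coeff g = if g = sr 0 then 1 else 0 := by
  simp [genb, Finsupp.single_apply, eq_comm]

def ofFun (f : DihedralGroup 4 → ℤ) : R8 := MonoidAlgebra.ofCoeff (Finsupp.equivFunOnFinite.symm f)

@[simp] theorem coeff_ofFun (f : DihedralGroup 4 → ℤ) (g) : (ofFun f).coeff g = f g := rfl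

theorem coeff_one' (g) : (1 : R8).coeff g = if g = 1 then 1 else 0 := by
  simp [MonoidAlgebra.one_def, Finsupp.single_apply, eq_comm]

theorem coeff_int (z : ℤ) (g) : (z : R8).coeff g = if g = 1 then z else 0 := by
  simp [intCast_def, Finsupp.single_apply, eq_comm]

theorem coeff_intmul (z : ℤ) (x : R8) (g) : ((z : R8) * x).coeff g = z * x.coeff g := by
  rw [← zsmul_eq_mul, coeff_smul, Finsupp.smul_apply, smul_eq_mul]

/-- An element congruent to one mod two divides an odd integer. -/
theorem exists_odd_multiple (q : R8) : ∃ (s : R8) (n : ℤ), Odd n ∧ (1 + 2 * q) * s = (n : R8) := by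
  classical
  let mat : R8 → Matrix (DihedralGroup 4) (DihedralGroup 4) ℤ :=
    fun x => Matrix.of fun g h => x.coeff (g * h⁻¹)
  have hmat : ∀ (x y : R8) g, (x * y).coeff g = (mat x).mulVec (fun h => y.coeff h) g := by
    intro x y g
    rw [coeff_mul']
    simp only [Matrix.mulVec, dotProduct, mat, Matrix.of_apply]
    refine Fintype.sum_equiv ((Equiv.inv _).trans (Equiv.mulRight g)) _ _ (fun h => ?_)
    simp
  set x := 1 + 2 * q with hx
  let v : DihedralGroup 4 → ℤ := fun g => if g = 1 then 1 else 0
  refine ⟨ofFun ((mat x).adjugate.mulVec v), (mat x).det, ?_, ?_⟩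
  · have h1 : (mat x).map (Int.castRingHom (ZMod 2)) = 1 := by
      ext g h
      have h2 : x.coeff (g * h⁻¹) = (1 : R8).coeff (g * h⁻¹) + 2 * q.coeff (g * h⁻¹) := by
        rw [hx, two_mul]; simp [two_mul]
      simp only [Matrix.map_apply, mat, Matrix.of_apply, h2]
      have h3 : (2 : ZMod 2) = 0 := rfl
      simp [coeff_one', Matrix.one_apply, h3, mul_inv_eq_one]
    have h2 : ((mat x).det : ZMod 2) = 1 := by
      have := (Int.castRingHom (ZMod 2)).map_det (mat x)
      rw [RingHom.mapMatrix_apply, h1, Matrix.det_one] at this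
      exact this
    rw [← ZMod.intCast_eq_one_iff_odd]
    exact h2
  · apply MonoidAlgebra.ext
    ext g
    rw [hmat]
    simp only [coeff_ofFun]
    change ((mat x).mulVec ((mat x).adjugate.mulVec v)) g = _
    rw [Matrix.mulVec_mulVec, Matrix.mul_adjugate]
    simp [v, coeff_int]


theorem exists_of_dvd (m : ℤ) (x : R8) (h : ∀ g, m ∣ x.coeff g) : ∃ q : R8, x = (m : R8) * q := by
  choose f hf using h
  refine ⟨ofFun f, ?_⟩
  apply MonoidAlgebra.ext
  ext g
  rw [coeff_intmul, hf]; rfl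

theorem odd_inv_aux (c : R8) (hc : Odd (aug c)) : ∃ c' q : R8, c * c' = 1 + 2 * q := by
  let c1 : R8 := ofFun fun g => match g with
    | r i => c.coeff (r (-i))
    | sr i => - c.coeff (sr i)
  have e0 : c1.coeff (r 0) = c.coeff (r 0) := rfl
  have e1 : c1.coeff (r 1) = c.coeff (r 3) := rfl
  have e2 : c1.coeff (r 2) = c.coeff (r 2) := rfl
  have e3 : c1.coeff (r 3) = c.coeff (r 1) := rfl
  have f0 : c1.coeff (sr 0) = - c.coeff (sr 0) := rfl
  have f1 : c1.coeff (sr 1) = - c.coeff (sr 1) := rfl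
  have f2 : c1.coeff (sr 2) = - c.coeff (sr 2) := rfl
  have f3 : c1.coeff (sr 3) = - c.coeff (sr 3) := rfl
  have haug : Even (aug c1 - aug c) := by
    rw [aug_eq_sum, aug_eq_sum, sum_D8, sum_D8, e0, e1, e2, e3, f0, f1, f2, f3]
    exact ⟨-(c.coeff (sr 0) + c.coeff (sr 1) + c.coeff (sr 2) + c.coeff (sr 3)), by ring⟩
  set d := c * c1 with hd
  have hodd : Odd (aug d) := by
    rw [hd, map_mul]
    refine hc.mul ?_
    have := haug.add_odd hc
    simpa using this
  have d13 : d.coeff (r 3) = d.coeff (r 1) := by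
    rw [hd, mul_r3, mul_r1, e0, e1, e2, e3, f0, f1, f2, f3]; ring
  have g0 : d.coeff (sr 0) = 0 := by
    rw [hd, mul_sr0, e0, e1, e2, e3, f0, f1, f2, f3]; ring
  have g1 : d.coeff (sr 1) = 0 := by
    rw [hd, mul_sr1, e0, e1, e2, e3, f0, f1, f2, f3]; ring
  have g2 : d.coeff (sr 2) = 0 := by
    rw [hd, mul_sr2, e0, e1, e2, e3, f0, f1, f2, f3]; ring
  have g3 : d.coeff (sr 3) = 0 := by
    rw [hd, mul_sr3, e0, e1, e2, e3, f0, f1, f2, f3]; ring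
  rw [aug_eq_sum, sum_D8, d13, g0, g1, g2, g3] at hodd
  obtain ⟨k, hk⟩ := hodd
  obtain ⟨q, hq⟩ := exists_of_dvd 2 (d * d - 1) (by
    intro g
    rw [coeff_sub, Finsupp.sub_apply, coeff_one']
    rcases g with i | i
    · fin_cases i
      · show (2 : ℤ) ∣ (d * d).coeff (r 0) - 1
        rw [mul_r0, d13, g0, g1, g2, g3]
        have h2 : d.coeff (r 2) = 2 * k + 1 - 2 * d.coeff (r 1) - d.coeff (r 0) := by linarith
        rw [h2]
        obtain ⟨e, he⟩ := Int.even_mul_succ_self (d.coeff (r 0))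
        exact ⟨d.coeff (r 0) * d.coeff (r 0) + d.coeff (r 1) ^ 2 + 2 * (k - d.coeff (r 1)) ^ 2
          + 2 * (k - d.coeff (r 1)) - d.coeff (r 0) * (2 * (k - d.coeff (r 1)) + 1), by ring⟩
      · show (2 : ℤ) ∣ (d * d).coeff (r 1) - 0
        rw [mul_r1, d13, g0, g1, g2, g3]
        exact ⟨d.coeff (r 1) * (d.coeff (r 0) + d.coeff (r 2)), by ring⟩
      · show (2 : ℤ) ∣ (d * d).coeff (r 2) - 0
        rw [mul_r2, d13, g0, g1, g2, g3]
        exact ⟨d.coeff (r 0) * d.coeff (r 2) + d.coeff (r 1) ^ 2, by ring⟩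
      · show (2 : ℤ) ∣ (d * d).coeff (r 3) - 0
        rw [mul_r3, d13, g0, g1, g2, g3]
        exact ⟨d.coeff (r 1) * (d.coeff (r 0) + d.coeff (r 2)), by ring⟩
    · fin_cases i
      · show (2 : ℤ) ∣ (d * d).coeff (sr 0) - 0
        rw [mul_sr0, d13, g0, g1, g2, g3]; simp
      · show (2 : ℤ) ∣ (d * d).coeff (sr 1) - 0
        rw [mul_sr1, d13, g0, g1, g2, g3]; simp
      · show (2 : ℤ) ∣ (d * d).coeff (sr 2) - 0
        rw [mul_sr2, d13, g0, g1, g2, g3]; simp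
      · show (2 : ℤ) ∣ (d * d).coeff (sr 3) - 0
        rw [mul_sr3, d13, g0, g1, g2, g3]; simp)
  refine ⟨c1 * d, q, ?_⟩
  rw [← mul_assoc, ← hd, ← sub_eq_iff_eq_add', hq]
  simp

theorem odd_inv32 (c : R8) (hc : Odd (aug c)) : ∃ c' q : R8, c * c' = 1 + 32 * q := by
  obtain ⟨c', q, h⟩ := odd_inv_aux c hc
  refine ⟨c' * (1 - 2 * q + 4 * q ^ 2 - 8 * q ^ 3 + 16 * q ^ 4), q ^ 5, ?_⟩
  rw [← mul_assoc, h]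
  noncomm_ring

theorem odd_multiple (c : R8) (hc : Odd (aug c)) : ∃ (s : R8) (n : ℤ), Odd n ∧ c * s = (n : R8) := by
  obtain ⟨c', q, h⟩ := odd_inv_aux c hc
  obtain ⟨s, n, hn, hs⟩ := exists_odd_multiple q
  exact ⟨c' * s, n, hn, by rw [← mul_assoc, h, hs]⟩

/-- Stable range one for `ℤ[D₈]/n`. -/
theorem sr1_mod (n : ℤ) (hn : n ≠ 0) (a b y z q : R8) (h : a * y + b * z = 1 + (n : R8) * q) :
    ∃ t w q' : R8, (a + b * t) * w = 1 + (n : R8) * q' := by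
  obtain ⟨m, hm⟩ : ∃ m : ℕ, m = n.natAbs := ⟨_, rfl⟩
  have : NeZero m := ⟨by omega⟩
  let π : R8 →+* MonoidAlgebra (ZMod m) (DihedralGroup 4) :=
    MonoidAlgebra.mapRingHom _ (Int.castRingHom (ZMod m))
  have hπ : ∀ x g, (π x).coeff g = ((x.coeff g : ℤ) : ZMod m) := by
    intro x g
    simp [π]
  have hsurj : Function.Surjective π := by
    intro x
    refine ⟨ofFun fun g => (x.coeff g).cast, ?_⟩
    apply MonoidAlgebra.ext
    ext g
    rw [hπ]; simp
  have hfin : Finite (MonoidAlgebra (ZMod m) (DihedralGroup 4)) :=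
    Finite.of_injective (fun x => (x.coeff : DihedralGroup 4 → ZMod m))
      (fun x y hxy => MonoidAlgebra.ext (DFunLike.coe_injective hxy))
  have hnm : ∀ k : ℤ, (k : ZMod m) = 0 ↔ n ∣ k := by
    intro k
    rw [ZMod.intCast_zmod_eq_zero_iff_dvd, hm]; simp
  have hπn : π (n : R8) = 0 := by
    rw [map_intCast, intCast_def, (hnm n).2 dvd_rfl]; simp
  obtain ⟨t, w, htw⟩ := sr1_right (π a) (π b) (π y) (π z) (by
    rw [← map_mul, ← map_mul, ← map_add, h, map_add, map_mul, hπn]; simp)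
  obtain ⟨t, rfl⟩ := hsurj t
  obtain ⟨w, rfl⟩ := hsurj w
  obtain ⟨q', hq'⟩ := exists_of_dvd n ((a + b * t) * w - 1) (by
    intro g
    rw [← hnm, ← hπ, map_sub, map_mul, map_add, map_mul, htw]; simp)
  exact ⟨t, w, q', by rw [← hq']; simp⟩

theorem odd_ne {n : ℤ} (h : Odd n) : n ≠ 0 := by rintro rfl; simp at h

end Part2

section Part3
open MonoidAlgebra DihedralGroup
set_option linter.unusedSimpArgs false

theorem num2 : (2 : R8) = (2 : ℤ) • (1 : R8) := by simp
theorem num3 : (3 : R8) = (3 : ℤ) • (1 : R8) := by simp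
theorem num4 : (4 : R8) = (4 : ℤ) • (1 : R8) := by simp
theorem num5 : (5 : R8) = (5 : ℤ) • (1 : R8) := by simp
theorem num8 : (8 : R8) = (8 : ℤ) • (1 : R8) := by simp
theorem num11 : (11 : R8) = (11 : ℤ) • (1 : R8) := by simp
theorem num16 : (16 : R8) = (16 : ℤ) • (1 : R8) := by simp

theorem single_eq_mul (g h : DihedralGroup 4) : (single (g * h) 1 : R8) = single g 1 * single h 1 := by
  simp [single_mul_single]

theorem gena_def' : gena = single (r 1) 1 := by simp [gena]
theorem genb_def' : genb = single (sr 0) 1 := by simp [genb]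

theorem rel_a : gena * gena * gena * gena = 1 := by
  rw [gena_def']; simp only [single_mul_single, mul_one]; rfl
theorem rel_b : genb * genb = 1 := by
  rw [genb_def']; simp only [single_mul_single, mul_one]; rfl
theorem rel_aba : gena * genb * gena = genb := by
  rw [gena_def', genb_def']; simp only [single_mul_single, mul_one]; rfl
theorem sig_def' : sig = 1 + gena + gena * gena + gena * gena * gena := by
  simp [sig, Finset.sum_range_succ, pow_succ]

theorem a_sig : gena * sig = sig := by
  rw [sig_def']
  have := rel_a
  calc _ = gena + gena * gena + gena * gena * gena + gena * gena * gena * gena := by noncomm_ring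
    _ = _ := by rw [this]; abel
theorem sig_a : sig * gena = sig := by
  rw [sig_def']
  have := rel_a
  calc _ = gena + gena * gena + gena * gena * gena + gena * gena * gena * gena := by noncomm_ring
    _ = _ := by rw [this]; abel
theorem rel_ab : gena * genb = genb * (gena * gena * gena) := by
  calc gena * genb = gena * genb * (gena * gena * gena * gena) := by rw [rel_a, mul_one]
    _ = (gena * genb * gena) * (gena * gena * gena) := by noncomm_ring
    _ = _ := by rw [rel_aba]
theorem sig_b : sig * genb = genb * sig := by
  have h2 : gena * gena * genb = genb * (gena * gena) := by
    calc gena * gena * genb = gena * (gena * genb) := by noncomm_ring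
      _ = gena * (genb * (gena * gena * gena)) := by rw [rel_ab]
      _ = (gena * genb * gena) * (gena * gena) := by noncomm_ring
      _ = _ := by rw [rel_aba]
  have h3 : gena * gena * gena * genb = genb * gena := by
    calc gena * gena * gena * genb = gena * (gena * gena * genb) := by noncomm_ring
      _ = (gena * genb * gena) * gena := by rw [h2]; noncomm_ring
      _ = _ := by rw [rel_aba]
  rw [sig_def', add_mul, add_mul, add_mul, h2, h3, rel_ab]
  noncomm_ring

theorem aug_sig : aug sig = 4 := by rw [sig_def']; simp

theorem mem_J (x y z : R8) : (x, y, z) ∈ J ↔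
    sig * x + (1 + genb * gena) * z = 0 ∧ (1 + genb) * y + (gena - 1) * z = 0 := by
  simp [J, bdry2, mulLeftOp]

theorem J_eq (j : J) : sig * j.1.1 + (1 + genb * gena) * j.1.2.2 = 0 ∧
    (1 + genb) * j.1.2.1 + (gena - 1) * j.1.2.2 = 0 := (mem_J _ _ _).1 j.2

def e1 : J := ⟨(gena - 1, 0, 0), by
  rw [mem_J, mul_sub, sig_a]; simp⟩
def e2 : J := ⟨(0, 1 - genb, 0), by
  rw [mem_J]
  refine ⟨by simp, ?_⟩
  calc _ = 1 - genb * genb := by noncomm_ring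
    _ = 0 := by rw [rel_b, sub_self]⟩
def e3 : J := ⟨(0, 1 - gena, 1 - genb * gena), by
  rw [mem_J]
  constructor
  · calc _ = 1 - genb * (gena * genb * gena) := by noncomm_ring
      _ = 0 := by rw [rel_aba, rel_b, sub_self]
  · calc _ = genb - gena * genb * gena := by noncomm_ring
      _ = 0 := by rw [rel_aba, sub_self]⟩
def e4 : J := ⟨(-(1 + genb), 0, sig), by
  rw [mem_J]
  constructor
  · calc _ = genb * (gena * sig) - sig * genb := by noncomm_ring
      _ = 0 := by rw [a_sig, sig_b, sub_self]
  · calc _ = gena * sig - sig := by noncomm_ring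
      _ = 0 := by rw [a_sig, sub_self]⟩

theorem coeff_gena_mul (x : R8) (g) : (gena * x).coeff g = x.coeff (r (-1) * g) := by
  rw [gena_def', coeff_single_mul_apply]; simp
theorem coeff_genb_mul (x : R8) (g) : (genb * x).coeff g = x.coeff (sr 0 * g) := by
  rw [genb_def', coeff_single_mul_apply]; simp

theorem aug_J2 (j : J) : aug j.1.2.1 = 0 := by
  have := congrArg aug (J_eq j).2
  simp at this
  exact this

theorem aug_J3 (j : J) : aug j.1.2.2 = -2 * aug j.1.1 := by
  have := congrArg aug (J_eq j).1
  simp [aug_sig] at this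
  linarith

theorem aug_J1 (j : J) : ∃ k, aug j.1.1 = 2 * k := by
  obtain ⟨⟨x, y, z⟩, hj⟩ := j
  have h := (J_eq ⟨_, hj⟩).1
  simp only at h ⊢
  have h1 := congrArg (fun t : R8 => t.coeff (r 0)) h
  have h2 := congrArg (fun t : R8 => t.coeff (sr 1)) h
  simp only [sig_def', add_mul, one_mul, mul_assoc, coeff_add, Finsupp.add_apply, coeff_gena_mul, coeff_genb_mul] at h1 h2
  change x.coeff (r 0) + x.coeff (r 3) + x.coeff (r 2) + x.coeff (r 1) +
    (z.coeff (r 0) + z.coeff (sr 1)) = 0 at h1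
  change x.coeff (sr 1) + x.coeff (sr 2) + x.coeff (sr 3) + x.coeff (sr 0) +
    (z.coeff (sr 1) + z.coeff (r 0)) = 0 at h2
  rw [aug_eq_sum, sum_D8]
  exact ⟨-(z.coeff (r 0) + z.coeff (sr 1)), by linarith⟩

open MulOpposite

theorem op_smul_J (j : J) (x : R8) : ((op x • j : J) : R8 × R8 × R8) =
    (j.1.1 * x, j.1.2.1 * x, j.1.2.2 * x) := rfl

def nuJ : J := ⟨(nrm, 0, -2 * nrm), by
  rw [mem_J, mul_nrm, aug_sig, ← mul_assoc, mul_nrm (_ * _), ← mul_assoc, mul_nrm (_ * _)]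
  simp [map_ofNat]⟩

theorem J_nrm (j : J) (k : ℤ) (hk : aug j.1.1 = 2 * k) : op nrm • j = (2 * k) • nuJ := by
  apply Subtype.ext
  rw [op_smul_J, mul_nrm j.1.1, mul_nrm j.1.2.1, mul_nrm j.1.2.2, aug_J2, aug_J3, hk]
  have h : (((2 * k) • nuJ : J) : R8 × R8 × R8) =
    ((2 * k) • nrm, (2 * k) • (0 : R8), (2 * k) • (-2 * nrm)) := rfl
  rw [h]
  simp only [zsmul_eq_mul]
  push_cast
  refine Prod.ext rfl (Prod.ext (by simp) ?_)
  simp only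
  grind

theorem int_mul_nrm_inj {m n : ℤ} (h : (m : R8) * nrm = (n : R8) * nrm) : m = n := by
  have := congrArg (fun t : R8 => t.coeff 1) h
  simpa [coeff_intmul, coeff_nrm] using this

theorem map_op {P : Type*} [AddCommGroup P] [Module R8ᵐᵒᵖ P] (g : P →ₗ[R8ᵐᵒᵖ] R8) (p : P) (x : R8) :
    g (op x • p) = g p * x := by simp

theorem aug_e4 : aug e4.1.1 = 2 * (-1) := by simp [e4]

theorem aug_map_J (g : J →ₗ[R8ᵐᵒᵖ] R8) (j : J) (k : ℤ) (hk : aug j.1.1 = 2 * k) :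
    aug (g j) = - k * aug (g e4) := by
  have h1 := congrArg g (J_nrm j k hk)
  have h2 := congrArg g (J_nrm e4 (-1) aug_e4)
  rw [map_op, mul_nrm, map_zsmul, zsmul_eq_mul] at h1 h2
  apply int_mul_nrm_inj
  rw [h1]
  push_cast at *
  rw [mul_assoc (-(k : R8)), h2]
  grind

theorem even_map_J (g : J →ₗ[R8ᵐᵒᵖ] R8) (j : J) : Even (aug (g j)) := by
  obtain ⟨k, hk⟩ := aug_J1 j
  have h1 := congrArg g (J_nrm j k hk)
  rw [map_op, mul_nrm, map_zsmul] at h1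
  have := congrArg (fun t : R8 => t.coeff 1) h1
  simp only [coeff_intmul, coeff_nrm, zsmul_eq_mul] at this
  rw [even_iff_two_dvd]
  exact ⟨k * (g nuJ).coeff 1, by linarith⟩

def p1 : J →ₗ[R8ᵐᵒᵖ] R8 := (LinearMap.fst R8ᵐᵒᵖ R8 (R8 × R8)).comp J.subtype
def p2 : J →ₗ[R8ᵐᵒᵖ] R8 :=
  ((LinearMap.fst R8ᵐᵒᵖ R8 R8).comp (LinearMap.snd R8ᵐᵒᵖ R8 (R8 × R8))).comp J.subtype
def p3 : J →ₗ[R8ᵐᵒᵖ] R8 :=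
  ((LinearMap.snd R8ᵐᵒᵖ R8 R8).comp (LinearMap.snd R8ᵐᵒᵖ R8 (R8 × R8))).comp J.subtype

theorem mulLeftOp_apply (c x : R8) : mulLeftOp c x = c * x := rfl

def theta : J →ₗ[R8ᵐᵒᵖ] R8 := p1 + p2 + (mulLeftOp (1 - genb)).comp p3

theorem theta_apply (j : J) : theta j = j.1.1 + j.1.2.1 + (1 - genb) * j.1.2.2 := rfl

theorem theta_e1 : theta e1 = gena - 1 := by simp [theta_apply, e1]
theorem theta_e2 : theta e2 = 1 - genb := by simp [theta_apply, e2]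
theorem theta_e4 : theta e4 = -(1 + genb) + (1 - genb) * sig := by simp [theta_apply, e4]

theorem range_mul {P : Type*} [AddCommGroup P] [Module R8ᵐᵒᵖ P] (g : P →ₗ[R8ᵐᵒᵖ] R8) {x : R8}
    (hx : x ∈ LinearMap.range g) (y : R8) : x * y ∈ LinearMap.range g :=
  (LinearMap.range g).smul_mem (op y) hx

theorem sub_aug_mem (I : Submodule R8ᵐᵒᵖ R8) (ha : gena - 1 ∈ I) (hb : 1 - genb ∈ I) (x : R8) :
    x - (aug x : R8) ∈ I := by
  have hm : ∀ x y : R8, x ∈ I → x * y ∈ I := fun x y h => I.smul_mem (op y) h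
  have hmul : ∀ g h : DihedralGroup 4, (single g 1 - 1 : R8) ∈ I → (single h 1 - 1 : R8) ∈ I →
      (single (g * h) 1 - 1 : R8) ∈ I := by
    intro g h hg hh
    have : (single (g * h) 1 - 1 : R8) = (single g 1 - 1) * single h 1 + (single h 1 - 1) := by
      rw [single_eq_mul]; noncomm_ring
    rw [this]
    exact I.add_mem (hm _ _ hg) hh
  have h1 : (single (r 1) 1 - 1 : R8) ∈ I := by rw [← gena_def']; exact ha
  have k0 : (single (sr 0) 1 - 1 : R8) ∈ I := by
    rw [← genb_def', ← neg_sub]; exact I.neg_mem hb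
  have h2 : (single (r 2) 1 - 1 : R8) ∈ I := hmul (r 1) (r 1) h1 h1
  have h3 : (single (r 3) 1 - 1 : R8) ∈ I := hmul (r 2) (r 1) h2 h1
  have h0 : (single (r 0) 1 - 1 : R8) ∈ I := hmul (r 3) (r 1) h3 h1
  have hr : ∀ i, (single (r i) 1 - 1 : R8) ∈ I := by
    intro i; fin_cases i
    exacts [h0, h1, h2, h3]
  have hall : ∀ g, (single g 1 - 1 : R8) ∈ I := by
    rintro (i | i)
    · exact hr i
    · have := hmul (sr 0) (r i) k0 (hr i)
      simpa using this
  induction x using MonoidAlgebra.induction_linear with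
  | zero => simp
  | add f g hf hg =>
    have : f + g - (aug (f + g) : R8) = (f - (aug f : R8)) + (g - (aug g : R8)) := by
      rw [map_add]; push_cast; abel
    rw [this]; exact I.add_mem hf hg
  | single g k =>
    have : (single g k : R8) - (aug (single g k) : R8) = (single g 1 - 1) * (k : R8) := by
      rw [aug_single, sub_mul, one_mul, ← (Int.cast_commute k (single g 1 : R8)).eq, ← zsmul_eq_mul]
      simp
    rw [this]
    exact hm _ _ (hall g)

theorem theta_surj (x : R8) (hx : Even (aug x)) : ∃ j, theta j = x := by
  have ha : gena - 1 ∈ LinearMap.range theta := ⟨e1, theta_e1⟩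
  have hb : 1 - genb ∈ LinearMap.range theta := ⟨e2, theta_e2⟩
  have h2 : (2 : R8) ∈ LinearMap.range theta := by
    have : (2 : R8) = -(theta e4) + (1 - genb) * (sig + 1) := by
      rw [theta_e4]; simp only [num2, num3, num4, num5, num8, num11, num16]; noncomm_ring
    rw [this]
    exact Submodule.add_mem _ (Submodule.neg_mem _ ⟨e4, rfl⟩) (range_mul _ hb _)
  obtain ⟨k, hk⟩ := hx
  have h3 := Submodule.add_mem _ (sub_aug_mem _ ha hb x) (range_mul _ h2 (k : R8))
  have : x - (aug x : R8) + 2 * (k : R8) = x := by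
    rw [hk]; push_cast; noncomm_ring
  rw [this] at h3
  exact h3

def kap : J := op (-3 - 5 * genb) • e4 +
  op (-2 * (3 + 2 * gena + gena * gena) * (1 - genb)) • e1

theorem kap_p2 : p2 kap = 0 := by
  simp [kap, p2, e4, e1]

theorem a_poly : (gena - 1) * (3 + 2 * gena + gena * gena) = sig - 4 := by
  rw [sig_def']; simp only [num2, num3, num4, num5, num8, num11, num16]; noncomm_ring

theorem theta_kap : theta kap = 16 := by
  rw [kap, map_add, map_op, map_op, theta_e1, theta_e4]
  have h1 : (gena - 1) * (-2 * (3 + 2 * gena + gena * gena) * (1 - genb)) =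
      -2 * ((gena - 1) * (3 + 2 * gena + gena * gena)) * (1 - genb) := by simp only [num2, num3, num4, num5, num8, num11, num16]; noncomm_ring
  rw [h1, a_poly]
  have hb := rel_b
  have hs := sig_b
  have h2 : (-(1 + genb) + (1 - genb) * sig) * (-3 - 5 * genb) + -2 * (sig - 4) * (1 - genb)
     = 11 + 0 * genb + 5 * (genb * genb) - 5 * sig  -5 * (sig * genb) + 3 * (genb * sig) + 5 * (genb * (sig * genb)) + 2 * (sig * genb) := by
    simp only [num2, num3, num4, num5, num8, num11, num16]; noncomm_ring
  rw [h2, hs, ← mul_assoc genb, hb]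
  simp only [num2, num3, num4, num5, num8, num11, num16]; noncomm_ring

def jz : J := op sig • e2 + op (2 * (3 + 2 * gena + gena * gena)) • e3

theorem sig_nrm : (1 + genb) * sig = nrm := by
  rw [nrm, sum_D8, sig_def', gena_def', genb_def', MonoidAlgebra.one_def]
  simp only [mul_add, add_mul, single_mul_single, mul_one, one_mul]
  change (single (r 0) 1 + single (sr 0) 1 + (single (r 1) 1 + single (sr 1) 1) +
      (single (r 2) 1 + single (sr 2) 1) + (single (r 3) 1 + single (sr 3) 1) : R8) = _
  abel

theorem p2_jz : p2 jz = 8 - nrm := by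
  have h : p2 jz = (1 - genb) * sig + (1 - gena) * (2 * (3 + 2 * gena + gena * gena)) := rfl
  have h1 : (1 - gena) * (2 * (3 + 2 * gena + gena * gena)) =
     -2 * ((gena - 1) * (3 + 2 * gena + gena * gena)) := by simp only [num2, num3, num4, num5, num8, num11, num16]; noncomm_ring
  rw [h, h1, a_poly, ← sig_nrm]
  simp only [num2, num3, num4, num5, num8, num11, num16]; noncomm_ring

end Part3

section Part4
open MonoidAlgebra DihedralGroup
open MulOpposite

theorem num32 : (32 : R8) = (32 : ℤ) • (1 : R8) := by simp

section moves
variable {P Q : Type*} [AddCommGroup P] [Module R8ᵐᵒᵖ P] [AddCommGroup Q] [Module R8ᵐᵒᵖ Q]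

def FRel (f f' : P →ₗ[R8ᵐᵒᵖ] R8) : Prop :=
  ∃ e : P ≃ₗ[R8ᵐᵒᵖ] P, ∀ p, f' p = f (e p)

theorem FRel.refl (f : P →ₗ[R8ᵐᵒᵖ] R8) : FRel f f := ⟨LinearEquiv.refl _ _, fun _ => rfl⟩

theorem FRel.trans {f f' f'' : P →ₗ[R8ᵐᵒᵖ] R8} (h : FRel f f') (h' : FRel f' f'') : FRel f f'' := by
  obtain ⟨e, he⟩ := h
  obtain ⟨e', he'⟩ := h'
  exact ⟨e'.trans e, fun p => by rw [he', he]; rfl⟩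

def cpr (g : P →ₗ[R8ᵐᵒᵖ] R8) (c : R8) : (P × R8) →ₗ[R8ᵐᵒᵖ] R8 := g.coprod (mulLeftOp c)

theorem cpr_apply (g : P →ₗ[R8ᵐᵒᵖ] R8) (c : R8) (x : P × R8) : cpr g c x = g x.1 + c * x.2 := rfl

theorem cpr_eq (f : (P × R8) →ₗ[R8ᵐᵒᵖ] R8) :
    f = cpr (f.comp (LinearMap.inl R8ᵐᵒᵖ P R8)) (f (0, 1)) := by
  ext x
  · simp [cpr_apply]
  · simp [cpr_apply, ← Prod.zero_eq_mk]

def tsp (p : P) : R8 →ₗ[R8ᵐᵒᵖ] P where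
  toFun x := op x • p
  map_add' x y := by rw [op_add, add_smul]
  map_smul' c x := by
    simp [smul_smul]

theorem tsp_apply (p : P) (x : R8) : tsp p x = op x • p := rfl

theorem frel_i (g h : P →ₗ[R8ᵐᵒᵖ] R8) (c : R8) :
    FRel (cpr g c) (cpr (g + (mulLeftOp c).comp h) c) := by
  refine ⟨LinearEquiv.skewProd (LinearEquiv.refl _ _) (LinearEquiv.refl _ _) h, ?_⟩
  intro p
  simp only [cpr_apply, LinearMap.add_apply, LinearMap.comp_apply, mulLeftOp_apply,
    LinearEquiv.skewProd_apply, LinearEquiv.refl_apply]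
  rw [mul_add]; abel

theorem frel_ii (g : P →ₗ[R8ᵐᵒᵖ] R8) (c : R8) (p : P) :
    FRel (cpr g c) (cpr g (c + g p)) := by
  refine ⟨(LinearEquiv.prodComm _ _ _).trans ((LinearEquiv.skewProd (LinearEquiv.refl _ _)
    (LinearEquiv.refl _ _) (tsp p)).trans (LinearEquiv.prodComm _ _ _)), ?_⟩
  intro x
  simp only [cpr_apply, LinearEquiv.trans_apply, LinearEquiv.prodComm_apply,
    LinearEquiv.skewProd_apply, LinearEquiv.refl_apply, Prod.fst_swap, Prod.snd_swap, tsp_apply,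
    map_add, map_op]
  rw [add_mul]; abel

theorem frel_iii {g g' : P →ₗ[R8ᵐᵒᵖ] R8} (h : FRel g g') (c : R8) : FRel (cpr g c) (cpr g' c) := by
  obtain ⟨e, he⟩ := h
  refine ⟨LinearEquiv.prodCongr e (LinearEquiv.refl _ _), ?_⟩
  intro x
  simp [cpr_apply, he]

def Good (g : P →ₗ[R8ᵐᵒᵖ] R8) (c : R8) : Prop := FRel (cpr g c) (cpr 0 1)
def Um (g : P →ₗ[R8ᵐᵒᵖ] R8) (c : R8) : Prop := ∃ p x, g p + c * x = 1

theorem good_one (g : P →ₗ[R8ᵐᵒᵖ] R8) : Good g 1 := by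
  have := frel_i g (-g) 1
  have h : g + (mulLeftOp 1).comp (-g) = 0 := by
    ext x; simp [mulLeftOp_apply]
  rw [h] at this
  exact this

theorem good_i {g : P →ₗ[R8ᵐᵒᵖ] R8} {c : R8} (h : P →ₗ[R8ᵐᵒᵖ] R8)
    (H : Good (g + (mulLeftOp c).comp h) c) : Good g c := (frel_i g h c).trans H
theorem good_ii {g : P →ₗ[R8ᵐᵒᵖ] R8} {c : R8} (p : P)
    (H : Good g (c + g p)) : Good g c := (frel_ii g c p).trans H
theorem good_iii {g g' : P →ₗ[R8ᵐᵒᵖ] R8} {c : R8} (h : FRel g g')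
    (H : Good g' c) : Good g c := (frel_iii h c).trans H

theorem um_i {g : P →ₗ[R8ᵐᵒᵖ] R8} {c : R8} (h : P →ₗ[R8ᵐᵒᵖ] R8)
    (H : Um g c) : Um (g + (mulLeftOp c).comp h) c := by
  obtain ⟨p, x, H⟩ := H
  refine ⟨p, x - h p, ?_⟩
  rw [← H]
  simp only [LinearMap.add_apply, LinearMap.comp_apply, mulLeftOp_apply]
  rw [mul_sub]; abel
theorem um_ii {g : P →ₗ[R8ᵐᵒᵖ] R8} {c : R8} (p : P)
    (H : Um g c) : Um g (c + g p) := by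
  obtain ⟨p', x, H⟩ := H
  refine ⟨p' - op x • p, x, ?_⟩
  rw [← H, map_sub, map_op, add_mul]; abel

theorem good_of_even {g : P →ₗ[R8ᵐᵒᵖ] R8} {c : R8} (hc : Odd (aug c))
    (hg : ∀ x, Even (aug x) → ∃ p, g p = x) : Good g c := by
  obtain ⟨p, hp⟩ := hg (1 - c) (by rw [map_sub, map_one]; exact odd_one.sub_odd hc)
  apply good_ii p
  rw [hp, add_sub_cancel]
  exact good_one g

/-- Two or more free summands. -/
theorem good_big (th : P →ₗ[R8ᵐᵒᵖ] R8) (hth : ∀ x, Even (aug x) → ∃ p, th p = x)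
    (G : (P × R8) →ₗ[R8ᵐᵒᵖ] R8) (c : R8) (hum : Um G c) : Good G c := by
  wlog hc : Odd (aug c) generalizing c
  · obtain ⟨p, x, h⟩ := id hum
    apply good_ii p
    apply this
    · exact um_ii p hum
    · rw [Int.not_odd_iff_even] at hc
      have := congrArg aug h
      simp only [map_add, map_mul, map_one] at this
      rw [map_add]
      have h2 : Odd (aug (G p) + aug c * aug x) := by rw [this]; exact odd_one
      have h3 : Odd (aug (G p)) := by
        rw [Int.odd_add] at h2
        exact h2.2 (hc.mul_right _)
      exact hc.add_odd h3
  obtain ⟨s, n, hn, hs⟩ := odd_multiple c hc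
  rw [cpr_eq G] at hum ⊢
  generalize G.comp (LinearMap.inl R8ᵐᵒᵖ P R8) = g at *
  generalize G (0, 1) = c1 at *
  obtain ⟨⟨p, y⟩, x, h⟩ := hum
  simp only [cpr_apply] at h
  obtain ⟨t, w, q, h1⟩ := sr1_mod n (odd_ne hn) c1 (g p + c * x) y 1 0 (by
    rw [mul_one, mul_zero, add_zero, ← h]; abel)
  apply good_iii (frel_ii g c1 (op t • p))
  rw [map_op]
  set c2 := c1 + g p * t with hc2
  have h2 : c2 * w + c * (x * t * w - s * q) = 1 := by
    have : c2 * w + c * (x * t * w - s * q) = (c1 + (g p + c * x) * t) * w - (c * s) * q := by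
      rw [hc2]; noncomm_ring
    rw [this, h1, hs]; abel
  generalize x * t * w - s * q = Y at h2
  apply good_iii (frel_i g ((mulLeftOp w).comp (th - g)) c2)
  apply good_i (((mulLeftOp Y).comp (th - g)).comp (LinearMap.fst R8ᵐᵒᵖ P R8))
  apply good_of_even hc
  intro z hz
  obtain ⟨p, hp⟩ := hth z hz
  refine ⟨(p, 0), ?_⟩
  simp only [cpr_apply, LinearMap.add_apply, LinearMap.comp_apply, mulLeftOp_apply,
    LinearMap.sub_apply, LinearMap.fst_apply, mul_zero, add_zero]
  rw [hp]
  have : g p + c2 * (w * (z - g p)) + c * (Y * (z - g p)) = g p + (c2 * w + c * Y) * (z - g p) := by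
    noncomm_ring
  rw [this, h2]; noncomm_ring

end moves

theorem balanced (a b : ℤ) (hb : b ≠ 0) : ∃ s, 2 * |a + b * s| ≤ |b| := by
  have h1 := Int.emod_nonneg a hb
  have h2 := Int.emod_lt_abs a hb
  have h3 := Int.emod_add_mul_ediv a b
  by_cases h : 2 * (a % b) ≤ |b|
  · refine ⟨-(a / b), ?_⟩
    have : a + b * -(a / b) = a % b := by linarith
    rw [this, abs_of_nonneg h1]; exact h
  · rcases abs_cases b with ⟨hb1, hb2⟩ | ⟨hb1, hb2⟩
    · refine ⟨-(a / b) - 1, ?_⟩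
      have : a + b * (-(a / b) - 1) = a % b - |b| := by rw [hb1]; linarith
      rw [this, abs_of_nonpos (by linarith)]; linarith
    · refine ⟨-(a / b) + 1, ?_⟩
      have : a + b * (-(a / b) + 1) = a % b - |b| := by rw [hb1]; linarith
      rw [this, abs_of_nonpos (by linarith)]; linarith

theorem um_odd {g : J →ₗ[R8ᵐᵒᵖ] R8} {c : R8} (h : Um g c) : Odd (aug c) := by
  obtain ⟨p, x, h⟩ := h
  have := congrArg aug h
  simp only [map_add, map_mul, map_one] at this
  have h2 : Odd (aug (g p) + aug c * aug x) := by rw [this]; exact odd_one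
  rw [Int.odd_add'] at h2
  exact Int.Odd.of_mul_left (h2.2 (even_map_J g p))

theorem um_dvd {g : J →ₗ[R8ᵐᵒᵖ] R8} {c : R8} (h : Um g c) (h0 : aug (g e4) = 0) : |aug c| = 1 := by
  obtain ⟨p, x, h⟩ := h
  have := congrArg aug h
  obtain ⟨k, hk⟩ := aug_J1 p
  simp only [map_add, map_mul, map_one] at this
  rw [aug_map_J g p k hk, h0] at this
  exact Int.isUnit_iff_abs_eq.1 (IsUnit.of_mul_eq_one (aug x) (by linarith))

theorem euclid (H : ∀ (g : J →ₗ[R8ᵐᵒᵖ] R8) (c : R8), Um g c → aug (g e4) = -2 → Good g c) (N : ℕ) :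
    ∀ (g : J →ₗ[R8ᵐᵒᵖ] R8) (c : R8), (aug c).natAbs = N → Um g c → Good g c := by
  induction N using Nat.strong_induction_on with
  | _ N ih =>
  intro g c hN hum
  obtain ⟨q, hq⟩ := even_map_J g e4
  have hmv : ∀ s : ℤ, aug ((g + (mulLeftOp c).comp ((mulLeftOp (s : R8)).comp p1)) e4) =
      2 * (q + aug c * (-s)) := by
    intro s
    have : p1 e4 = e4.1.1 := rfl
    simp only [LinearMap.add_apply, LinearMap.comp_apply, mulLeftOp_apply, map_add, map_mul,
      map_intCast, hq, this, aug_e4]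
    simp; ring
  have hodd := um_odd hum
  have hne : aug c ≠ 0 := odd_ne hodd
  by_cases h1 : |aug c| = 1
  · have h2 : aug c * aug c = 1 := by rw [← abs_mul_abs_self, h1]; rfl
    apply good_i ((mulLeftOp ((aug c * (q + 1) : ℤ) : R8)).comp p1)
    apply H _ _ (um_i _ hum)
    rw [hmv]
    linear_combination (-2 * (q + 1)) * h2
  · obtain ⟨s, hs⟩ := balanced q (aug c) hne
    have hmv' := hmv (-s)
    rw [neg_neg] at hmv'
    have hum' := um_i ((mulLeftOp ((-s : ℤ) : R8)).comp p1) hum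
    apply good_i ((mulLeftOp ((-s : ℤ) : R8)).comp p1)
    generalize (g + (mulLeftOp c).comp ((mulLeftOp ((-s : ℤ) : R8)).comp p1)) = g' at *
    generalize q + aug c * s = q' at *
    have hq0 : q' ≠ 0 := by
      rintro rfl
      exact h1 (um_dvd hum' (by simpa using hmv'))
    obtain ⟨t, ht⟩ := balanced (aug c) (2 * q') (by omega)
    apply good_ii (op (t : R8) • e4)
    have hum2 := um_ii (op (t : R8) • e4) hum'
    refine ih _ ?_ _ _ rfl hum2
    rw [← hN, map_op, map_add, map_mul, hmv', map_intCast]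
    rw [abs_mul, abs_two] at ht
    have : (0 : ℤ) < |aug c| := abs_pos.2 hne
    zify
    linarith [abs_nonneg (aug c + 2 * q' * t)]

theorem range_even {g h0 : J →ₗ[R8ᵐᵒᵖ] R8} (hg : ∀ j, g j = theta j + 32 * h0 j) (n : ℤ)
    (hn : Odd n) (j1 j2 : J) (q : R8) (hj1 : g j1 = 1 + (n : R8) * q) (hj2 : g j2 = 16 * (n : R8))
    (x : R8) (hx : Even (aug x)) : ∃ j, g j = x := by
  change x ∈ LinearMap.range g
  obtain ⟨j, rfl⟩ := theta_surj x hx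
  have hcom : ∀ y : R8, y * (n : R8) = (n : R8) * y := fun y => ((Int.cast_commute n y).eq).symm
  have m1 : theta j + 32 * h0 j ∈ LinearMap.range g := ⟨j, hg j⟩
  have m2 : 1 + (n : R8) * q ∈ LinearMap.range g := ⟨j1, hj1⟩
  have m3 : 16 * (n : R8) ∈ LinearMap.range g := ⟨j2, hj2⟩
  have m4 : theta j * (n : R8) ∈ LinearMap.range g := by
    have : theta j * (n : R8) = (theta j + 32 * h0 j) * (n : R8) - (16 * (n : R8)) * (2 * h0 j) := by
      rw [add_mul, mul_assoc 32, hcom (h0 j)]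
      simp only [num2, num16, num32]; noncomm_ring
    rw [this]
    exact Submodule.sub_mem _ (range_mul g m1 _) (range_mul g m3 _)
  have m5 : theta j * 16 ∈ LinearMap.range g := by
    have : theta j * 16 = (1 + (n : R8) * q) * (theta j * 16) - (16 * (n : R8)) * (q * theta j) := by
      simp only [num16]; noncomm_ring
    rw [this]
    exact Submodule.sub_mem _ (range_mul g m2 _) (range_mul g m3 _)
  have hcop : IsCoprime (16 : ℤ) n := by
    have : IsCoprime (2 : ℤ) n := by
      obtain ⟨k, rfl⟩ := hn
      exact ⟨-k, 1, by ring⟩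
    have := this.pow_left (m := 4)
    norm_num at this
    exact this
  obtain ⟨a, b, hab⟩ := hcop
  have hab' : (16 : R8) * (a : R8) + (n : R8) * (b : R8) = 1 := by
    have := congrArg (fun z : ℤ => (z : R8)) hab
    push_cast at this
    rw [← this, (Int.cast_commute b (n : R8)).eq]
    congr 1
    exact ((Int.cast_commute a (16 : R8)).eq).symm
  have : theta j = theta j * 16 * (a : R8) + theta j * (n : R8) * (b : R8) := by
    rw [mul_assoc, mul_assoc, ← mul_add, hab', mul_one]
  rw [this]
  exact Submodule.add_mem _ (range_mul g m5 _) (range_mul g m4 _)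

end Part4

section Part5
open MonoidAlgebra DihedralGroup
open MulOpposite

theorem alg1 {A : Type*} [Ring A] (B c X nr : A) (u : ℤ) :
    B + c * ((32 : ℤ) • (1 : A) * (u • X) * ((8 : ℤ) • (1 : A) - nr)) =
      B + (256 : ℤ) • u • (c * X) + -(c * ((32 : ℤ) • (1 : A) * (u • X)) * nr) := by
  simp only [smul_mul_assoc, one_mul, mul_sub, mul_smul_comm, mul_one, smul_smul, mul_assoc]
  rw [sub_eq_add_neg, add_assoc]
  congr 3
  ring

theorem alg2 {A : Type*} [Ring A] (B c x e t0 d E w : A) (m : ℤ) :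
    (B + c * (x * e * t0) + m • (c * (x * e * t0)) + E + d * t0 - E) * w =
      (B + (d + c * (x * e)) * t0) * w + m • (c * (x * e * t0) * w) := by
  rw [← smul_mul_assoc m (c * (x * e * t0)) w, ← add_mul]
  congr 1
  generalize m • (c * (x * e * t0)) = Y
  rw [add_mul, mul_assoc c]
  abel

theorem good_B {g h0 : J →ₗ[R8ᵐᵒᵖ] R8} (hg : ∀ j, g j = theta j + 32 * h0 j)
    (he : aug (g e4) = -2) (c : R8) (hum : Um g c) : Good g c := by
  have hodd := um_odd hum
  obtain ⟨j, x, h⟩ := hum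
  obtain ⟨s, n, hn, hs⟩ := exists_odd_multiple (h0 kap)
  have hkap : g kap = 16 * (1 + 2 * h0 kap) := by
    rw [hg, theta_kap]; simp only [num2, num16, num32]; noncomm_ring
  have hcop : IsCoprime (256 : ℤ) n := by
    have : IsCoprime (2 : ℤ) n := by
      obtain ⟨k, rfl⟩ := hn
      exact ⟨-k, 1, by ring⟩
    have := this.pow_left (m := 8)
    norm_num at this
    exact this
  obtain ⟨u, v', huv'⟩ := hcop
  obtain ⟨v, huv⟩ : ∃ v, 256 * u = 1 + n * v := ⟨-v', by linarith⟩
  clear huv'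
  set k0 : J := op (8 : R8) • j - op (p2 j) • jz with hk0
  have hp2k0 : p2 k0 = 0 := by
    rw [hk0, map_sub, map_op, map_op, p2_jz, sub_mul, nrm_mul]
    have : aug (p2 j) = 0 := aug_J2 j
    rw [this]
    rw [Int.cast_zero, zero_mul, sub_zero, num8, mul_smul_comm, smul_mul_assoc, mul_one, one_mul,
      sub_self]
  have hd : g k0 + g jz * p2 j + c * (x * 8) = 8 := by
    rw [hk0, map_sub, map_op, map_op]
    have : g j * 8 - g jz * p2 j + g jz * p2 j + c * (x * 8) = (g j + c * x) * 8 := by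
      rw [sub_add_cancel, add_mul, mul_assoc]
    rw [this, h, one_mul]
  obtain ⟨t0, w, q, h1⟩ := sr1_mod n (odd_ne hn) (g jz) (g k0 + c * (x * 8))
    (p2 j * ((32 * u : ℤ) : R8)) ((32 * u : ℤ) : R8) (v : R8) (by
      rw [← mul_assoc, ← add_mul]
      have : g jz * p2 j + (g k0 + c * (x * 8)) = ((8 : ℤ) : R8) := by
        rw [Int.cast_ofNat]; refine Eq.trans ?_ hd; abel
      rw [this, ← Int.cast_mul, ← Int.cast_mul, ← Int.cast_one, ← Int.cast_add]
      congr 1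
      linarith)
  set X : R8 := x * 8 * t0 with hX
  apply good_i ((mulLeftOp (32 * (u • X))).comp p2)
  apply good_of_even hodd
  set g' := g + (mulLeftOp c).comp ((mulLeftOp (32 * (u • X))).comp p2) with hg'
  have ev : ∀ j, g' j = g j + c * (32 * (u • X) * p2 j) := fun j => rfl
  have ev0 : ∀ j, p2 j = 0 → g' j = g j := by
    intro j hj; rw [ev, hj]; simp
  have p2e4 : p2 e4 = 0 := rfl
  obtain ⟨m1, hm1⟩ : ∃ m1, aug (c * (32 * (u • X))) = 2 * m1 := by
    refine ⟨16 * aug (c * (u • X)), ?_⟩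
    simp only [map_mul, map_ofNat]; ring
  have hjz : g' jz = g jz + c * X + (n * v) • (c * X) + g e4 * (m1 • nrm) := by
    rw [ev, p2_jz]
    have e1 : g e4 * (m1 • nrm) = - (c * (32 * (u • X)) * nrm) := by
      rw [mul_nrm (c * _), hm1, mul_smul_comm, mul_nrm, he]
      rw [← zsmul_eq_mul, ← zsmul_eq_mul, smul_smul, ← neg_smul]
      congr 1
      ring
    have e2 : c * X + (n * v) • (c * X) = (256 * u) • (c * X) := by
      rw [huv, add_smul, one_smul]
    rw [e1, add_assoc (g jz), e2, mul_smul]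
    rw [num32, num8]
    exact alg1 _ _ _ _ _
  refine range_even (h0 := h0 + (mulLeftOp c).comp ((mulLeftOp (u • X)).comp p2)) ?_ n hn
    (op w • (jz + op t0 • k0 - op (m1 • nrm) • e4)) (op s • kap) (q + v • (c * X * w)) ?_ ?_
  · intro j
    rw [ev, hg]
    simp only [LinearMap.add_apply, LinearMap.comp_apply, mulLeftOp_apply]
    simp only [num32]
    noncomm_ring
  · rw [map_op, map_sub, map_add, map_op, map_op, hjz, ev0 _ hp2k0, ev0 _ p2e4]
    have : (g jz + c * X + (n * v) • (c * X) + g e4 * m1 • nrm + g k0 * t0 - g e4 * m1 • nrm) * w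
      = (g jz + (g k0 + c * (x * 8)) * t0) * w + (n * v) • (c * X * w) := by
      rw [hX]
      exact alg2 _ _ _ _ _ _ _ _ _
    rw [this, h1, mul_smul, zsmul_eq_mul, zsmul_eq_mul]
    noncomm_ring
  · rw [map_op, ev0 _ kap_p2, hkap, mul_assoc, hs]

theorem good_J (g : J →ₗ[R8ᵐᵒᵖ] R8) (c : R8) (hum : Um g c) : Good g c := by
  refine euclid ?_ _ g c rfl hum
  clear hum g c
  intro g c hum he
  obtain ⟨c', q, hc⟩ := odd_inv32 c (um_odd hum)
  apply good_i ((mulLeftOp c').comp (theta - g))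
  have hth : aug (theta e4) = -2 := by rw [theta_e4]; simp
  refine good_B (h0 := (mulLeftOp q).comp (theta - g)) ?_ ?_ c (um_i _ hum)
  · intro j
    simp only [LinearMap.add_apply, LinearMap.comp_apply, mulLeftOp_apply, LinearMap.sub_apply]
    rw [← mul_assoc, hc]
    simp only [num32]
    noncomm_ring
  · simp only [LinearMap.add_apply, LinearMap.comp_apply, mulLeftOp_apply, LinearMap.sub_apply,
      map_add, map_mul, map_sub, he, hth]
    ring

def Cancel (P : Type) [AddCommGroup P] [Module R8ᵐᵒᵖ P] : Prop :=
  ∀ f : (P × R8) →ₗ[R8ᵐᵒᵖ] R8, Function.Surjective f →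
    ∃ e : (P × R8) ≃ₗ[R8ᵐᵒᵖ] (P × R8), ∀ p, p.2 = f (e p)

theorem cancel_of_good {P : Type} [AddCommGroup P] [Module R8ᵐᵒᵖ P]
    (H : ∀ (g : P →ₗ[R8ᵐᵒᵖ] R8) c, Um g c → Good g c) : Cancel P := by
  intro f hf
  obtain ⟨g, c, rfl⟩ : ∃ g c, f = cpr g c := ⟨_, _, cpr_eq f⟩
  obtain ⟨⟨p, x⟩, h⟩ := hf 1
  rw [cpr_apply] at h
  obtain ⟨e, he⟩ := H g c ⟨p, x, h⟩
  refine ⟨e, fun p => ?_⟩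
  rw [← he]
  simp [cpr_apply]

theorem Cancel.congr {P Q : Type} [AddCommGroup P] [Module R8ᵐᵒᵖ P] [AddCommGroup Q]
    [Module R8ᵐᵒᵖ Q] (i : P ≃ₗ[R8ᵐᵒᵖ] Q) (h : Cancel P) : Cancel Q := by
  intro f hf
  let i' := LinearEquiv.prodCongr i (LinearEquiv.refl R8ᵐᵒᵖ R8)
  obtain ⟨e, he⟩ := h (f.comp i'.toLinearMap) (hf.comp i'.surjective)
  refine ⟨i'.symm.trans (e.trans i'), fun p => ?_⟩
  have := he (i'.symm p)
  exact this

/-- `X × R^(n+1) ≃ (X × R^n) × R`. -/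
def splitLast (X : Type) [AddCommGroup X] [Module R8ᵐᵒᵖ X] (n : ℕ) :
    (X × (Fin (n + 1) → R8)) ≃ₗ[R8ᵐᵒᵖ] ((X × (Fin n → R8)) × R8) where
  toFun p := ((p.1, fun i => p.2 i.succ), p.2 0)
  invFun p := (p.1.1, Fin.cons p.2 p.1.2)
  map_add' _ _ := rfl
  map_smul' _ _ := rfl
  left_inv p := by
    refine Prod.ext rfl ?_
    exact Fin.cons_self_tail p.2
  right_inv _ := rfl

def dropZero (X : Type) [AddCommGroup X] [Module R8ᵐᵒᵖ X] :
    (X × (Fin 0 → R8)) ≃ₗ[R8ᵐᵒᵖ] X where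
  toFun p := p.1
  invFun x := (x, 0)
  map_add' _ _ := rfl
  map_smul' _ _ := rfl
  left_inv p := Prod.ext rfl (Subsingleton.elim _ _)
  right_inv _ := rfl

theorem cancel_J (n : ℕ) : Cancel (J × (Fin n → R8)) := by
  cases n with
  | zero => exact (cancel_of_good good_J).congr (dropZero J).symm
  | succ m =>
    refine Cancel.congr (splitLast J m).symm (cancel_of_good ?_)
    intro G c hum
    refine good_big (theta.comp (LinearMap.fst R8ᵐᵒᵖ J (Fin m → R8))) ?_ G c hum
    intro x hx
    obtain ⟨j, hj⟩ := theta_surj x hx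
    exact ⟨(j, 0), hj⟩

theorem cancel_iso {X P : Type} [AddCommGroup X] [Module R8ᵐᵒᵖ X] [AddCommGroup P]
    [Module R8ᵐᵒᵖ P] (hP : Cancel P) (φ : (X × R8) ≃ₗ[R8ᵐᵒᵖ] (P × R8)) :
    Nonempty (X ≃ₗ[R8ᵐᵒᵖ] P) := by
  obtain ⟨e, he⟩ := hP ((LinearMap.snd R8ᵐᵒᵖ X R8).comp φ.symm.toLinearMap)
    (Prod.snd_surjective.comp φ.symm.surjective)
  let ψ : (P × R8) ≃ₗ[R8ᵐᵒᵖ] (X × R8) := e.trans φ.symm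
  have hψ : ∀ p, (ψ p).2 = p.2 := fun p => (he p).symm
  have hψ' : ∀ p, (ψ.symm p).2 = p.2 := fun p => by rw [← hψ, ψ.apply_symm_apply]
  refine ⟨LinearEquiv.ofLinearMap
    ((LinearMap.fst R8ᵐᵒᵖ P R8).comp (ψ.symm.toLinearMap.comp (LinearMap.inl R8ᵐᵒᵖ X R8)))
    ((LinearMap.fst R8ᵐᵒᵖ X R8).comp (ψ.toLinearMap.comp (LinearMap.inl R8ᵐᵒᵖ P R8))) ?_ ?_⟩
  · apply LinearMap.ext
    intro p
    have : ((ψ (p, 0)).1, (0 : R8)) = ψ (p, 0) := Prod.ext rfl (hψ (p, 0)).symm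
    simp [this]
  · apply LinearMap.ext
    intro p
    have : ((ψ.symm (p, 0)).1, (0 : R8)) = ψ.symm (p, 0) := Prod.ext rfl (hψ' (p, 0)).symm
    simp [this]

theorem rank_le_J {M : Type} [AddCommGroup M] [Module R8ᵐᵒᵖ M] {r s : ℕ}
    (ψ : (M × (Fin r → R8)) ≃ₗ[R8ᵐᵒᵖ] (J × (Fin s → R8))) : r ≤ s := by
  let v : (Fin r → Bool) → (Fin r → R8) := fun l i => if l i then 1 else 0
  let F : (Fin r → Bool) → (Fin s → ZMod 2) := fun l i => ((aug ((ψ (0, v l)).2 i) : ℤ) : ZMod 2)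
  have hF : Function.Injective F := by
    intro l l' hl
    have h1 : ∀ i, ∃ k : ℤ, aug ((ψ (0, v l - v l')).2 i) = 2 * k := by
      intro i
      have := congrFun hl i
      simp only [F] at this
      rw [← sub_eq_zero, ← Int.cast_sub, ZMod.intCast_zmod_eq_zero_iff_dvd] at this
      obtain ⟨k, hk⟩ := this
      refine ⟨k, ?_⟩
      have e : ((0 : M), v l - v l') = (0, v l) - (0, v l') := by simp
      rw [e, map_sub, Prod.snd_sub, Pi.sub_apply, map_sub]
      exact hk
    choose k hk using h1
    obtain ⟨k', hk'⟩ := aug_J1 (ψ (0, v l - v l')).1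
    have h2 : op nrm • (ψ (0, v l - v l')) = (2 : ℤ) • (k' • nuJ, fun i => k i • nrm) := by
      refine Prod.ext ?_ ?_
      · change op nrm • (ψ (0, v l - v l')).1 = (2 : ℤ) • (k' • nuJ)
        rw [J_nrm _ k' hk', mul_smul]
      · funext i
        change (ψ (0, v l - v l')).2 i * nrm = (2 : ℤ) • (k i • nrm)
        rw [mul_nrm, hk, ← zsmul_eq_mul, mul_smul]
    have h3 := congrArg ψ.symm h2
    rw [map_smul, ψ.symm_apply_apply, map_zsmul] at h3
    generalize ψ.symm _ = y at h3
    funext i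
    have h4 := congrFun (congrArg Prod.snd h3) i
    change (v l i - v l' i) * nrm = (2 : ℤ) • y.2 i at h4
    rw [mul_nrm] at h4
    have h5 := congrArg (fun t : R8 => t.coeff 1) h4
    simp only [coeff_intmul, coeff_nrm, zsmul_eq_mul, map_sub] at h5
    simp only [v] at h5
    rcases hli : l i <;> rcases hli' : l' i <;> simp [hli, hli'] at h5 ⊢ <;> omega
  have := Fintype.card_le_of_injective F hF
  simp at this
  exact (Nat.pow_le_pow_iff_right (by norm_num)).1 this
theorem final_aux {M : Type} [AddCommGroup M] [Module R8ᵐᵒᵖ M] (r t : ℕ)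
    (φ : (M × (Fin r → R8)) ≃ₗ[R8ᵐᵒᵖ] (J × (Fin (t + r) → R8))) :
    Nonempty (M ≃ₗ[R8ᵐᵒᵖ] (J × (Fin t → R8))) := by
  induction r with
  | zero => exact ⟨(dropZero M).symm.trans φ⟩
  | succ r ih =>
    obtain ⟨φ'⟩ := cancel_iso (cancel_J (t + r))
      (((splitLast M r).symm.trans φ).trans (splitLast J (t + r)))
    exact ih φ'


end Part5

/-- If `M` is a finitely generated (right) `ℤ[D₈]`-module with
`M ⊕ ℤ[D₈]^r ≅ J ⊕ ℤ[D₈]^s`, then `s ≥ r` and `M ≅ J ⊕ ℤ[D₈]^{s−r}`. -/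
theorem stable_class_of_J (M : Type) [AddCommGroup M] [Module R8ᵐᵒᵖ M]
    [Module.Finite R8ᵐᵒᵖ M] (r s : ℕ)
    (h : Nonempty ((M × (Fin r → R8)) ≃ₗ[R8ᵐᵒᵖ] (↥J × (Fin s → R8)))) :
    r ≤ s ∧ Nonempty (M ≃ₗ[R8ᵐᵒᵖ] (↥J × (Fin (s - r) → R8))) := by
  obtain ⟨φ⟩ := h
  have hrs := rank_le_J φ
  refine ⟨hrs, ?_⟩
  obtain ⟨t, rfl⟩ := Nat.exists_eq_add_of_le' hrs
  rw [Nat.add_sub_cancel]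
  exact final_aux r t φ

end
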